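/- There exists a constant K > 0 such that for every R ≥ max(R₀, 1) one has Ê(R) ≥ 0 and the differential inequality dÊ/dR(R) ≤ −Ê(R)/R + K Ê(R)/R² + K Ê(R)^{3/2}/R. -/

import Mathlib

open Real MeasureTheory Set

/-- Partial derivative with respect to the first (time) variable `R`. -/
noncomputable def pdR (f : ℝ → ℝ → ℝ) (R θ : ℝ) : ℝ := deriv (fun r => f r θ) R

/-- Partial derivative with respect to the second (space) variable `θ`. -/
noncomputable def pdT (f : ℝ → ℝ → ℝ) (R θ : ℝ) : ℝ := deriv (fun t => f R t) θ

/-!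
Up to a spatial divergence, the time derivative of the energy density is the sum of the damping
terms `-2 (U_R - b / R)² / R` and `-e^{4U} (A_R² + A_θ²) / (4 R³)` and of a multiple of the
indefinite density `e^{4U} (A_R² - A_θ²)`, whose coefficient vanishes exactly for `b = 1 / 4`. The
kinetic energy of `U` is thus damped at twice the rate `1 / R`, and its potential energy not at
all. The correction is a virial quantity: its derivative is, to leading order,
`(∫ (U_R - ⟨U_R⟩)² - ∫ U_θ²) / R`, which shares the damping between the two, because
`∫ (U_R - ⟨U_R⟩)² ≤ ∫ (U_R - 1 / (4 R))²` by the minimality of the variance.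

Two error terms remain, and both are controlled by `|U - ⟨U⟩|² ≤ (π / 6) ∫ U_θ²`. This bound shows
that the correction is `O(energy / R)` with a constant below `1`, so that the corrected energy
dominates the energy for `R ≥ 1`; it also bounds the cubic term
`∫ (U - ⟨U⟩) e^{4U} (A_R² - A_θ²) / R³` by a multiple of `energy^{3/2} / R`.
-/

open Function (Periodic uncurry)

section IntervalMean

variable {f g : ℝ → ℝ} {a b : ℝ}

theorem integral_sq_nonneg (hab : a ≤ b) (f : ℝ → ℝ) : 0 ≤ ∫ x in a..b, f x ^ 2 :=
  intervalIntegral.integral_nonneg hab fun _ _ => sq_nonneg _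

theorem sq_integral_mul_le (hab : a ≤ b)
    (hf : IntervalIntegrable (fun x => f x ^ 2) volume a b)
    (hg : IntervalIntegrable (fun x => g x ^ 2) volume a b)
    (hfg : IntervalIntegrable (fun x => f x * g x) volume a b) :
    (∫ x in a..b, f x * g x) ^ 2 ≤ (∫ x in a..b, f x ^ 2) * ∫ x in a..b, g x ^ 2 := by
  have quadratic_nonneg (s : ℝ) : 0 ≤ (∫ x in a..b, f x ^ 2) * (s * s)
      + 2 * (∫ x in a..b, f x * g x) * s + ∫ x in a..b, g x ^ 2 :=
    calc 0 ≤ ∫ x in a..b, (s * f x + g x) ^ 2 :=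
          intervalIntegral.integral_nonneg hab fun x _ => sq_nonneg _
      _ = ∫ x in a..b, s ^ 2 * f x ^ 2 + 2 * s * (f x * g x) + g x ^ 2 := by
          congr with x; ring
      _ = _ := by
          rw [intervalIntegral.integral_add ((hf.const_mul _).add (hfg.const_mul _)) hg,
            intervalIntegral.integral_add (hf.const_mul _) (hfg.const_mul _),
            intervalIntegral.integral_const_mul, intervalIntegral.integral_const_mul]
          ring
  have := discrim_le_zero quadratic_nonneg
  rw [discrim] at this
  linarith

theorem sub_mul_interval_average (f : ℝ → ℝ) (a b : ℝ) :
    (b - a) * ⨍ x in a..b, f x = ∫ x in a..b, f x := by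
  rcases eq_or_ne a b with rfl | hab
  · simp
  · rw [interval_average_eq_div, mul_div_cancel₀ _ (sub_ne_zero.2 hab.symm)]

theorem integral_sub_interval_average (hf : IntervalIntegrable f volume a b) :
    ∫ x in a..b, (f x - ⨍ y in a..b, f y) = 0 := by
  rw [intervalIntegral.integral_sub hf intervalIntegrable_const, intervalIntegral.integral_const,
    smul_eq_mul, sub_mul_interval_average, sub_self]

theorem integral_sub_sq_eq (hf : IntervalIntegrable f volume a b)
    (hf2 : IntervalIntegrable (fun x => f x ^ 2) volume a b) (c : ℝ) :
    ∫ x in a..b, (f x - c) ^ 2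
      = (∫ x in a..b, (f x - ⨍ y in a..b, f y) ^ 2) + (b - a) * ((⨍ y in a..b, f y) - c) ^ 2 := by
  have expand (k : ℝ) : ∫ x in a..b, (f x - k) ^ 2
      = (∫ x in a..b, f x ^ 2) - 2 * k * ((b - a) * ⨍ y in a..b, f y) + (b - a) * k ^ 2 :=
    calc ∫ x in a..b, (f x - k) ^ 2
        = ∫ x in a..b, f x ^ 2 - 2 * k * f x + k ^ 2 := by congr with x; ring
      _ = _ := by
        rw [intervalIntegral.integral_add (hf2.sub (hf.const_mul _)) intervalIntegrable_const,
          intervalIntegral.integral_sub hf2 (hf.const_mul _), intervalIntegral.integral_const_mul,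
          intervalIntegral.integral_const, smul_eq_mul, sub_mul_interval_average]
  rw [expand, expand]
  ring

theorem integral_sub_interval_average_sq_le (hab : a ≤ b) (hf : IntervalIntegrable f volume a b)
    (hf2 : IntervalIntegrable (fun x => f x ^ 2) volume a b) (c : ℝ) :
    ∫ x in a..b, (f x - ⨍ y in a..b, f y) ^ 2 ≤ ∫ x in a..b, (f x - c) ^ 2 := by
  rw [integral_sub_sq_eq hf hf2 c]
  exact le_add_of_nonneg_right (mul_nonneg (sub_nonneg.2 hab) (sq_nonneg _))

end IntervalMean

section Periodic

variable {f : ℝ → ℝ} {T : ℝ}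

theorem periodic_deriv (hper : Periodic f T) : Periodic (deriv f) T := fun t => by
  rw [← deriv_comp_add_const, hper.funext]

theorem integral_deriv_eq_zero_of_periodic (hf : ContDiff ℝ 1 f) (hper : Periodic f T) :
    ∫ t in 0..T, deriv f t = 0 := by
  rw [intervalIntegral.integral_deriv_eq_sub (fun t _ => hf.differentiable (by simp) t)
    ((hf.continuous_deriv le_rfl).intervalIntegrable _ _), hper.eq, sub_self]

theorem integral_sub_midpoint_mul_deriv (hf : ContDiff ℝ 1 f) (hper : Periodic f T) (x : ℝ) :
    ∫ t in x..x + T, (t - (x + T / 2)) * deriv f t = T * f x - ∫ t in 0..T, f t := by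
  rw [intervalIntegral.integral_mul_deriv_eq_deriv_mul (u := fun t => t - (x + T / 2))
      (u' := fun _ => 1) (v := f) (fun t _ => (hasDerivAt_id t).sub_const _)
      (fun t _ => (hf.differentiable (by simp) t).hasDerivAt) intervalIntegrable_const
      ((hf.continuous_deriv le_rfl).intervalIntegrable _ _)]
  simp only [one_mul, hper x, hper.intervalIntegral_add_eq x 0, zero_add]
  ring

theorem sq_sub_interval_average_le_of_periodic (hT : 0 < T) (hf : ContDiff ℝ 1 f)
    (hper : Periodic f T) (x : ℝ) :
    (f x - ⨍ t in 0..T, f t) ^ 2 ≤ T / 12 * ∫ t in 0..T, deriv f t ^ 2 := by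
  have integral_weight_sq : ∫ t in x..x + T, (t - (x + T / 2)) ^ 2 = T ^ 3 / 12 := by
    rw [intervalIntegral.integral_comp_sub_right (fun t => t ^ 2), integral_pow]
    ring
  have integral_deriv_sq : ∫ t in x..x + T, deriv f t ^ 2 = ∫ t in 0..T, deriv f t ^ 2 := by
    simpa using ((periodic_deriv hper).comp (· ^ 2)).intervalIntegral_add_eq x 0
  have sq_deviation_le : (T * f x - ∫ t in 0..T, f t) ^ 2
      ≤ T ^ 3 / 12 * ∫ t in 0..T, deriv f t ^ 2 := by
    rw [← integral_sub_midpoint_mul_deriv hf hper, ← integral_weight_sq, ← integral_deriv_sq]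
    apply sq_integral_mul_le (le_add_of_nonneg_right hT.le) <;>
      exact Continuous.intervalIntegrable (by fun_prop) _ _
  calc (f x - ⨍ t in 0..T, f t) ^ 2
      = (T * f x - ∫ t in 0..T, f t) ^ 2 / T ^ 2 := by
        rw [interval_average_eq_div, sub_zero]; field_simp
    _ ≤ (T ^ 3 / 12 * ∫ t in 0..T, deriv f t ^ 2) / T ^ 2 := by gcongr
    _ = T / 12 * ∫ t in 0..T, deriv f t ^ 2 := by field_simp

theorem integral_sub_interval_average_sq_le_of_periodic (hT : 0 < T) (hf : ContDiff ℝ 1 f)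
    (hper : Periodic f T) :
    ∫ x in 0..T, (f x - ⨍ t in 0..T, f t) ^ 2 ≤ T ^ 2 / 12 * ∫ t in 0..T, deriv f t ^ 2 := by
  have hfc := hf.continuous
  calc ∫ x in 0..T, (f x - ⨍ t in 0..T, f t) ^ 2
      ≤ ∫ x in 0..T, T / 12 * ∫ t in 0..T, deriv f t ^ 2 :=
        intervalIntegral.integral_mono hT.le (Continuous.intervalIntegrable (by fun_prop) _ _)
          intervalIntegrable_const (sq_sub_interval_average_le_of_periodic hT hf hper)
    _ = T ^ 2 / 12 * ∫ t in 0..T, deriv f t ^ 2 := by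
        rw [intervalIntegral.integral_const, smul_eq_mul]; ring

end Periodic

section PartialDerivatives

variable {f : ℝ → ℝ → ℝ} {R θ : ℝ}

theorem hasDerivAt_pdR (hf : DifferentiableAt ℝ (uncurry f) (R, θ)) :
    HasDerivAt (fun r => f r θ) (pdR f R θ) R :=
  (hf.comp (g := uncurry f) (f := fun r : ℝ => (r, θ)) R (by fun_prop)).hasDerivAt

theorem hasDerivAt_pdT (hf : DifferentiableAt ℝ (uncurry f) (R, θ)) :
    HasDerivAt (fun t => f R t) (pdT f R θ) θ :=
  (hf.comp (g := uncurry f) (f := fun t : ℝ => (R, t)) θ (by fun_prop)).hasDerivAt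

theorem pdR_eq_fderiv (hf : DifferentiableAt ℝ (uncurry f) (R, θ)) :
    pdR f R θ = fderiv ℝ (uncurry f) (R, θ) (1, 0) :=
  (hf.hasFDerivAt.comp_hasDerivAt (f := fun r => (r, θ)) R
    ((hasDerivAt_id R).prodMk (hasDerivAt_const R θ))).deriv

theorem pdT_eq_fderiv (hf : DifferentiableAt ℝ (uncurry f) (R, θ)) :
    pdT f R θ = fderiv ℝ (uncurry f) (R, θ) (0, 1) :=
  (hf.hasFDerivAt.comp_hasDerivAt (f := fun t => (R, t)) θ
    ((hasDerivAt_const θ R).prodMk (hasDerivAt_id θ))).deriv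

theorem uncurry_pdR_eq_fderiv (hf : Differentiable ℝ (uncurry f)) :
    uncurry (pdR f) = fun z => fderiv ℝ (uncurry f) z (1, 0) :=
  funext fun z => pdR_eq_fderiv (hf z)

theorem uncurry_pdT_eq_fderiv (hf : Differentiable ℝ (uncurry f)) :
    uncurry (pdT f) = fun z => fderiv ℝ (uncurry f) z (0, 1) :=
  funext fun z => pdT_eq_fderiv (hf z)

theorem contDiff_pdR {n : ℕ∞} (hf : ContDiff ℝ (n + 1) (uncurry f)) :
    ContDiff ℝ n (uncurry (pdR f)) := by
  rw [uncurry_pdR_eq_fderiv (hf.differentiable (by simp))]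
  exact (hf.fderiv_right le_rfl).clm_apply contDiff_const

theorem contDiff_pdT {n : ℕ∞} (hf : ContDiff ℝ (n + 1) (uncurry f)) :
    ContDiff ℝ n (uncurry (pdT f)) := by
  rw [uncurry_pdT_eq_fderiv (hf.differentiable (by simp))]
  exact (hf.fderiv_right le_rfl).clm_apply contDiff_const

theorem continuous_pdR (hf : ContDiff ℝ 1 (uncurry f)) (R : ℝ) : Continuous (pdR f R) :=
  (contDiff_pdR (n := 0) hf).continuous.uncurry_left R

theorem continuous_pdT (hf : ContDiff ℝ 1 (uncurry f)) (R : ℝ) : Continuous (pdT f R) :=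
  (contDiff_pdT (n := 0) hf).continuous.uncurry_left R

theorem pdR_pdT_comm (hf : ContDiff ℝ 2 (uncurry f)) : pdR (pdT f) = pdT (pdR f) := by
  ext R θ
  have hdiff : Differentiable ℝ (uncurry f) := hf.differentiable (by simp)
  have hfderiv : DifferentiableAt ℝ (fderiv ℝ (uncurry f)) (R, θ) :=
    (hf.fderiv_right (m := 1) (by norm_num)).differentiable (by simp) _
  have hsymm : IsSymmSndFDerivAt ℝ (uncurry f) (R, θ) :=
    hf.contDiffAt.isSymmSndFDerivAt (by simp)
  rw [pdR_eq_fderiv ((contDiff_pdT (n := 1) hf).differentiable (by simp) _),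
    pdT_eq_fderiv ((contDiff_pdR (n := 1) hf).differentiable (by simp) _),
    uncurry_pdT_eq_fderiv hdiff, uncurry_pdR_eq_fderiv hdiff,
    fderiv_clm_apply hfderiv (differentiableAt_const _),
    fderiv_clm_apply hfderiv (differentiableAt_const _)]
  simpa using hsymm (1, 0) (0, 1)

theorem periodic_pdR {T : ℝ} (hf : ∀ r, Periodic (f r) T) (R : ℝ) : Periodic (pdR f R) T :=
  fun θ => by simp only [pdR, fun r => hf r θ]

theorem periodic_pdT {T : ℝ} (hf : Periodic (f R) T) : Periodic (pdT f R) T :=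
  periodic_deriv hf

theorem hasDerivAt_integral_pdR {s : Set ℝ} (hs : IsOpen s)
    (hf : ContDiffOn ℝ 1 (uncurry f) (s ×ˢ univ)) (hR : R ∈ s) (a b : ℝ) :
    HasDerivAt (fun r => ∫ θ in a..b, f r θ) (∫ θ in a..b, pdR f R θ) R := by
  have hopen : IsOpen (s ×ˢ (univ : Set ℝ)) := hs.prod isOpen_univ
  have hdiff {r : ℝ} (hr : r ∈ s) (θ : ℝ) : DifferentiableAt ℝ (uncurry f) (r, θ) :=
    (hf.differentiableOn (by simp)).differentiableAt (hopen.mem_nhds ⟨hr, mem_univ θ⟩)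
  have hpdR : ContinuousOn (uncurry (pdR f)) (s ×ˢ univ) :=
    ((hf.continuousOn_fderiv_of_isOpen hopen le_rfl).clm_apply continuousOn_const).congr
      fun z hz => pdR_eq_fderiv (hdiff hz.1 z.2)
  have hslice {g : ℝ → ℝ → ℝ} (hg : ContinuousOn (uncurry g) (s ×ˢ univ)) {r : ℝ} (hr : r ∈ s) :
      Continuous (g r) :=
    hg.comp_continuous (f := fun θ => (r, θ)) (by fun_prop) fun θ => ⟨hr, mem_univ θ⟩
  obtain ⟨ε, hε, hball⟩ := Metric.nhds_basis_closedBall.mem_iff.1 (hs.mem_nhds hR)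
  obtain ⟨C, hC⟩ := ((isCompact_closedBall R ε).prod isCompact_uIcc).exists_bound_of_continuousOn
    (hpdR.mono (prod_mono hball (subset_univ (uIcc a b))))
  exact (intervalIntegral.hasDerivAt_integral_of_dominated_loc_of_deriv_le
    (bound := fun _ => C) (Metric.closedBall_mem_nhds R hε)
    (Filter.eventually_of_mem (hs.mem_nhds hR) fun r hr =>
      (hslice hf.continuousOn hr).aestronglyMeasurable)
    ((hslice hf.continuousOn hR).intervalIntegrable _ _)
    (hslice hpdR hR).aestronglyMeasurable
    (.of_forall fun θ hθ r hr => hC (r, θ) ⟨hr, uIoc_subset_uIcc hθ⟩)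
    intervalIntegrable_const
    (.of_forall fun θ _ r hr => hasDerivAt_pdR (hdiff (hball hr) θ))).2

theorem hasDerivAt_integral_sub_const_mul_pdR (hf : ContDiff ℝ 2 (uncurry f)) (c a b : ℝ) :
    HasDerivAt (fun r => ∫ θ in a..b, (f r θ - c) * pdR f r θ)
      ((∫ θ in a..b, pdR f R θ ^ 2) + ∫ θ in a..b, (f R θ - c) * pdR (pdR f) R θ) R := by
  have hf1 : ContDiff ℝ 1 (uncurry f) := hf.of_le (by norm_num)
  have hP : ContDiff ℝ 1 (uncurry (pdR f)) := contDiff_pdR (n := 1) hf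
  have hPR : Continuous (uncurry (pdR (pdR f))) := (contDiff_pdR (n := 0) hP).continuous
  have hfc := hf1.continuous
  have hPc := hP.continuous
  have hsmooth : ContDiff ℝ 1 (uncurry fun r θ => (f r θ - c) * pdR f r θ) := by
    simp only [Function.uncurry_def] at *
    fun_prop
  refine (hasDerivAt_integral_pdR isOpen_univ hsmooth.contDiffOn (mem_univ R) a b).congr_deriv ?_
  rw [← intervalIntegral.integral_add (Continuous.intervalIntegrable (by fun_prop) _ _)
    (Continuous.intervalIntegrable (by fun_prop) _ _)]
  congr with θ
  exact (((hasDerivAt_pdR (hf1.differentiable (by simp) _)).sub_const c).mul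
    (hasDerivAt_pdR (hP.differentiable (by simp) _))).deriv.trans (by ring)

theorem hasDerivAt_integral_sub_average_mul_pdR (hf : ContDiff ℝ 2 (uncurry f)) (a b : ℝ) :
    HasDerivAt (fun r => ∫ θ in a..b, (f r θ - ⨍ t in a..b, f r t) * pdR f r θ)
      ((∫ θ in a..b, (pdR f R θ - ⨍ t in a..b, pdR f R t) ^ 2)
        + ∫ θ in a..b, (f R θ - ⨍ t in a..b, f R t) * pdR (pdR f) R θ) R := by
  have hf1 : ContDiff ℝ 1 (uncurry f) := hf.of_le (by norm_num)
  have hP : ContDiff ℝ 1 (uncurry (pdR f)) := contDiff_pdR (n := 1) hf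
  have hfc := hf1.continuous
  have hPc := hP.continuous
  set m : ℝ := ⨍ t in a..b, f R t with hm
  have hmean : HasDerivAt (fun r => ⨍ t in a..b, f r t) (⨍ t in a..b, pdR f R t) R := by
    simp only [interval_average_eq_div]
    exact (hasDerivAt_integral_pdR isOpen_univ hf1.contDiffOn (mem_univ R) a b).div_const _
  have hpdR : HasDerivAt (fun r => ∫ θ in a..b, pdR f r θ) (∫ θ in a..b, pdR (pdR f) R θ) R :=
    hasDerivAt_integral_pdR isOpen_univ hP.contDiffOn (mem_univ R) a b
  have hsplit (r : ℝ) : ∫ θ in a..b, (f r θ - ⨍ t in a..b, f r t) * pdR f r θ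
      = (∫ θ in a..b, (f r θ - m) * pdR f r θ)
        - ((⨍ t in a..b, f r t) - m) * ∫ θ in a..b, pdR f r θ := by
    rw [← intervalIntegral.integral_const_mul,
      ← intervalIntegral.integral_sub (Continuous.intervalIntegrable (by fun_prop) _ _)
      (Continuous.intervalIntegrable (by fun_prop) _ _)]
    congr with θ
    ring
  have hvar := integral_sub_sq_eq (f := pdR f R) (a := a) (b := b)
    (Continuous.intervalIntegrable (by fun_prop) _ _)
    (Continuous.intervalIntegrable (by fun_prop) _ _) 0
  simp only [sub_zero] at hvar
  rw [funext hsplit]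
  refine ((hasDerivAt_integral_sub_const_mul_pdR hf m a b).sub
    ((hmean.sub_const m).mul hpdR)).congr_deriv ?_
  rw [← hm, sub_self, zero_mul, add_zero, ← sub_mul_interval_average (pdR f R), hvar]
  ring

end PartialDerivatives

namespace Gowdy

variable {U A : ℝ → ℝ → ℝ} {b R : ℝ}

/-- The Gowdy wave equation for `U`, at time `R` only. -/
def WaveEquationU (U A : ℝ → ℝ → ℝ) (R : ℝ) : Prop :=
  ∀ θ, deriv (fun r => r * pdR U r θ) R - deriv (fun t => R * pdT U R t) θ
    = exp (4 * U R θ) / (2 * R) * (pdR A R θ ^ 2 - pdT A R θ ^ 2)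

/-- The Gowdy wave equation for the twist potential `A`, at time `R` only. -/
def WaveEquationA (U A : ℝ → ℝ → ℝ) (R : ℝ) : Prop :=
  ∀ θ, deriv (fun r => r⁻¹ * pdR A r θ) R - deriv (fun t => R⁻¹ * pdT A R t) θ
    = 4 / R * (-(pdR U R θ * pdR A R θ) + pdT U R θ * pdT A R θ)

/-- The Lagrangian density of the `A`-part of the field, without its power of `R`. -/
noncomputable def twistLagrangian (U A : ℝ → ℝ → ℝ) (R θ : ℝ) : ℝ :=
  exp (4 * U R θ) * (pdR A R θ ^ 2 - pdT A R θ ^ 2)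

/-- The energy density of the `A`-part of the field, without its power of `R`. -/
noncomputable def twistEnergyDensity (U A : ℝ → ℝ → ℝ) (R θ : ℝ) : ℝ :=
  exp (4 * U R θ) * (pdR A R θ ^ 2 + pdT A R θ ^ 2)

/-- The integrand of the `A`-effective energy `𝓔_b`. -/
noncomputable def energyDensity (U A : ℝ → ℝ → ℝ) (b R θ : ℝ) : ℝ :=
  (pdR U R θ - b / R) ^ 2 + pdT U R θ ^ 2
    + exp (4 * U R θ) / (4 * R ^ 2) * (pdR A R θ ^ 2 + pdT A R θ ^ 2)

/-- The spatial flux whose `θ`-derivative balances the growth of `energyDensity`. -/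
noncomputable def energyFlux (U A : ℝ → ℝ → ℝ) (b R θ : ℝ) : ℝ :=
  2 * (pdR U R θ - b / R) * pdT U R θ
    + exp (4 * U R θ) / (2 * R ^ 2) * (pdR A R θ * pdT A R θ)

/-- The `A`-effective energy `𝓔_b`. -/
noncomputable def energy (U A : ℝ → ℝ → ℝ) (b R : ℝ) : ℝ :=
  ∫ θ in 0..2 * π, energyDensity U A b R θ

/-- The correction term `𝒢^U`. -/
noncomputable def correction (U : ℝ → ℝ → ℝ) (R : ℝ) : ℝ :=
  1 / R * ∫ θ in 0..2 * π, (U R θ - ⨍ t in 0..2 * π, U R t) * pdR U R θ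

/-- The `(U, A)`-effective energy `Ê`. -/
noncomputable def correctedEnergy (U A : ℝ → ℝ → ℝ) (R : ℝ) : ℝ :=
  energy U A (1 / 4) R + correction U R

theorem WaveEquationU.pdR_pdR_eq (eqU : WaveEquationU U A R) (hU : ContDiff ℝ 2 (uncurry U))
    (hR : R ≠ 0) (θ : ℝ) :
    pdR (pdR U) R θ
      = pdT (pdT U) R θ - pdR U R θ / R + twistLagrangian U A R θ / (2 * R ^ 2) := by
  have hUR := hasDerivAt_pdR ((contDiff_pdR (n := 1) hU).differentiable (by simp) (R, θ))
  have hUT := hasDerivAt_pdT ((contDiff_pdT (n := 1) hU).differentiable (by simp) (R, θ))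
  have h := eqU θ
  rw [((hasDerivAt_id' R).fun_mul hUR).deriv, (hUT.const_mul R).deriv] at h
  rw [twistLagrangian]
  field_simp at h ⊢
  linear_combination h

theorem WaveEquationA.pdR_pdR_eq (eqA : WaveEquationA U A R) (hA : ContDiff ℝ 2 (uncurry A))
    (hR : R ≠ 0) (θ : ℝ) :
    pdR (pdR A) R θ = pdT (pdT A) R θ + pdR A R θ / R
      + 4 * (pdT U R θ * pdT A R θ - pdR U R θ * pdR A R θ) := by
  have hAR := hasDerivAt_pdR ((contDiff_pdR (n := 1) hA).differentiable (by simp) (R, θ))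
  have hAT := hasDerivAt_pdT ((contDiff_pdT (n := 1) hA).differentiable (by simp) (R, θ))
  have h := eqA θ
  rw [((hasDerivAt_inv hR).fun_mul hAR).deriv, (hAT.const_mul R⁻¹).deriv] at h
  field_simp at h ⊢
  linear_combination h

theorem pdR_energyDensity_eq (hU : ContDiff ℝ 2 (uncurry U)) (hA : ContDiff ℝ 2 (uncurry A))
    (hR : R ≠ 0) (b θ : ℝ) :
    pdR (energyDensity U A b) R θ
      = 2 * (pdR U R θ - b / R) * (pdR (pdR U) R θ + b / R ^ 2)
        + 2 * pdT U R θ * pdT (pdR U) R θ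
        + (4 * pdR U R θ / (4 * R ^ 2) - 1 / (2 * R ^ 3)) * twistEnergyDensity U A R θ
        + exp (4 * U R θ) / (2 * R ^ 2)
          * (pdR A R θ * pdR (pdR A) R θ + pdT A R θ * pdT (pdR A) R θ) := by
  have dU := hasDerivAt_pdR (hU.differentiable (by simp) (R, θ))
  have dUR := hasDerivAt_pdR ((contDiff_pdR (n := 1) hU).differentiable (by simp) (R, θ))
  have dUT := hasDerivAt_pdR ((contDiff_pdT (n := 1) hU).differentiable (by simp) (R, θ))
  have dAR := hasDerivAt_pdR ((contDiff_pdR (n := 1) hA).differentiable (by simp) (R, θ))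
  have dAT := hasDerivAt_pdR ((contDiff_pdT (n := 1) hA).differentiable (by simp) (R, θ))
  have hsq : HasDerivAt (fun r : ℝ => 4 * r ^ 2) (4 * (2 * R)) R := by
    simpa using (hasDerivAt_pow 2 R).const_mul 4
  rw [pdR_pdT_comm hU] at dUT
  rw [pdR_pdT_comm hA] at dAT
  refine (((((dUR.fun_sub ((hasDerivAt_const R b).fun_div (hasDerivAt_id' R) hR)).fun_pow 2).fun_add
    (dUT.fun_pow 2)).fun_add (((dU.const_mul 4).exp.fun_div hsq (by positivity)).fun_mul
    ((dAR.fun_pow 2).fun_add (dAT.fun_pow 2))))).deriv.trans ?_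
  rw [twistEnergyDensity]
  push_cast
  field_simp
  ring

theorem pdT_energyFlux_eq (hU : ContDiff ℝ 2 (uncurry U)) (hA : ContDiff ℝ 2 (uncurry A))
    (b θ : ℝ) :
    pdT (energyFlux U A b) R θ
      = 2 * pdT (pdR U) R θ * pdT U R θ + 2 * (pdR U R θ - b / R) * pdT (pdT U) R θ
        + exp (4 * U R θ) / (2 * R ^ 2) * (4 * pdT U R θ * (pdR A R θ * pdT A R θ)
          + pdT (pdR A) R θ * pdT A R θ + pdR A R θ * pdT (pdT A) R θ) := by
  have dU := hasDerivAt_pdT (hU.differentiable (by simp) (R, θ))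
  have dUR := hasDerivAt_pdT ((contDiff_pdR (n := 1) hU).differentiable (by simp) (R, θ))
  have dUT := hasDerivAt_pdT ((contDiff_pdT (n := 1) hU).differentiable (by simp) (R, θ))
  have dAR := hasDerivAt_pdT ((contDiff_pdR (n := 1) hA).differentiable (by simp) (R, θ))
  have dAT := hasDerivAt_pdT ((contDiff_pdT (n := 1) hA).differentiable (by simp) (R, θ))
  refine ((((dUR.sub_const (b / R)).const_mul 2).fun_mul dUT).fun_add
    (((dU.const_mul 4).exp.div_const (2 * R ^ 2)).fun_mul (dAR.fun_mul dAT))).deriv.trans ?_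
  ring

theorem pdR_energyDensity_eq_add_pdT_energyFlux (hU : ContDiff ℝ 2 (uncurry U))
    (hA : ContDiff ℝ 2 (uncurry A)) (hR : R ≠ 0) (eqU : WaveEquationU U A R)
    (eqA : WaveEquationA U A R) (b θ : ℝ) :
    pdR (energyDensity U A b) R θ
      = -(2 / R) * (pdR U R θ - b / R) ^ 2 - 1 / (4 * R ^ 3) * twistEnergyDensity U A R θ
        - (b - 1 / 4) / R ^ 3 * twistLagrangian U A R θ + pdT (energyFlux U A b) R θ := by
  rw [pdR_energyDensity_eq hU hA hR, pdT_energyFlux_eq hU hA, eqU.pdR_pdR_eq hU hR,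
    eqA.pdR_pdR_eq hA hR, twistLagrangian, twistEnergyDensity]
  field_simp
  ring

theorem continuous_twistLagrangian (hU : ContDiff ℝ 1 (uncurry U))
    (hA : ContDiff ℝ 1 (uncurry A)) (R : ℝ) : Continuous (twistLagrangian U A R) := by
  have := hU.continuous.uncurry_left R
  have := continuous_pdR hA R
  have := continuous_pdT hA R
  unfold twistLagrangian
  fun_prop

theorem continuous_twistEnergyDensity (hU : ContDiff ℝ 1 (uncurry U))
    (hA : ContDiff ℝ 1 (uncurry A)) (R : ℝ) : Continuous (twistEnergyDensity U A R) := by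
  have := hU.continuous.uncurry_left R
  have := continuous_pdR hA R
  have := continuous_pdT hA R
  unfold twistEnergyDensity
  fun_prop

theorem contDiffOn_energyDensity (hU : ContDiff ℝ 2 (uncurry U)) (hA : ContDiff ℝ 2 (uncurry A))
    (b : ℝ) : ContDiffOn ℝ 1 (uncurry (energyDensity U A b)) ({0}ᶜ ×ˢ univ) := by
  have hU1 : ContDiff ℝ 1 (uncurry U) := hU.of_le (by norm_num)
  have hUR : ContDiff ℝ 1 (uncurry (pdR U)) := contDiff_pdR (n := 1) hU
  have hUT : ContDiff ℝ 1 (uncurry (pdT U)) := contDiff_pdT (n := 1) hU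
  have hAR : ContDiff ℝ 1 (uncurry (pdR A)) := contDiff_pdR (n := 1) hA
  have hAT : ContDiff ℝ 1 (uncurry (pdT A)) := contDiff_pdT (n := 1) hA
  have ne_zero : ∀ z ∈ ({0}ᶜ : Set ℝ) ×ˢ (univ : Set ℝ), z.1 ≠ 0 := fun z hz => hz.1
  have sq_ne_zero : ∀ z ∈ ({0}ᶜ : Set ℝ) ×ˢ (univ : Set ℝ), 4 * z.1 ^ 2 ≠ 0 :=
    fun z hz => mul_ne_zero four_ne_zero (pow_ne_zero 2 (ne_zero z hz))
  unfold energyDensity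
  simp only [Function.uncurry_def] at *
  fun_prop (disch := assumption)

theorem contDiff_energyFlux (hU : ContDiff ℝ 2 (uncurry U)) (hA : ContDiff ℝ 2 (uncurry A))
    (b R : ℝ) : ContDiff ℝ 1 (energyFlux U A b R) := by
  have hU1 : ContDiff ℝ 1 (uncurry U) := hU.of_le (by norm_num)
  have hUR : ContDiff ℝ 1 (uncurry (pdR U)) := contDiff_pdR (n := 1) hU
  have hUT : ContDiff ℝ 1 (uncurry (pdT U)) := contDiff_pdT (n := 1) hU
  have hAR : ContDiff ℝ 1 (uncurry (pdR A)) := contDiff_pdR (n := 1) hA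
  have hAT : ContDiff ℝ 1 (uncurry (pdT A)) := contDiff_pdT (n := 1) hA
  unfold energyFlux
  fun_prop

theorem periodic_energyFlux {T : ℝ} (hU : ∀ r, Periodic (U r) T) (hA : ∀ r, Periodic (A r) T)
    (b R : ℝ) : Periodic (energyFlux U A b R) T := fun θ => by
  simp only [energyFlux, hU R θ, periodic_pdR hU R θ, periodic_pdT (hU R) θ,
    periodic_pdR hA R θ, periodic_pdT (hA R) θ]

theorem hasDerivAt_energy (hU : ContDiff ℝ 2 (uncurry U)) (hA : ContDiff ℝ 2 (uncurry A))
    (hUper : ∀ r, Periodic (U r) (2 * π)) (hAper : ∀ r, Periodic (A r) (2 * π))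
    (hR : R ≠ 0) (eqU : WaveEquationU U A R) (eqA : WaveEquationA U A R) (b : ℝ) :
    HasDerivAt (energy U A b)
      (-(2 / R) * (∫ θ in 0..2 * π, (pdR U R θ - b / R) ^ 2)
        - 1 / (4 * R ^ 3) * (∫ θ in 0..2 * π, twistEnergyDensity U A R θ)
        - (b - 1 / 4) / R ^ 3 * ∫ θ in 0..2 * π, twistLagrangian U A R θ) R := by
  have hU1 : ContDiff ℝ 1 (uncurry U) := hU.of_le (by norm_num)
  have hA1 : ContDiff ℝ 1 (uncurry A) := hA.of_le (by norm_num)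
  have hP := continuous_pdR hU1 R
  have hS := continuous_twistEnergyDensity hU1 hA1 R
  have hW := continuous_twistLagrangian hU1 hA1 R
  have hF := contDiff_energyFlux hU hA b R
  have hF' : Continuous (pdT (energyFlux U A b) R) := hF.continuous_deriv le_rfl
  have integral_flux : ∫ θ in 0..2 * π, pdT (energyFlux U A b) R θ = 0 :=
    integral_deriv_eq_zero_of_periodic hF (periodic_energyFlux hUper hAper b R)
  refine (hasDerivAt_integral_pdR isOpen_compl_singleton (contDiffOn_energyDensity hU hA b)
    hR 0 (2 * π)).congr_deriv ?_
  simp only [pdR_energyDensity_eq_add_pdT_energyFlux hU hA hR eqU eqA]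
  rw [intervalIntegral.integral_add, intervalIntegral.integral_sub, intervalIntegral.integral_sub,
    intervalIntegral.integral_const_mul, intervalIntegral.integral_const_mul,
    intervalIntegral.integral_const_mul, integral_flux, add_zero]
  all_goals exact Continuous.intervalIntegrable (by fun_prop) _ _

theorem integral_sub_const_mul_pdT_pdT {T : ℝ} (hU : ContDiff ℝ 2 (uncurry U))
    (hUper : Periodic (U R) T) (c : ℝ) :
    ∫ θ in 0..T, (U R θ - c) * pdT (pdT U) R θ = -∫ θ in 0..T, pdT U R θ ^ 2 := by
  have hU1 : ContDiff ℝ 1 (uncurry U) := hU.of_le (by norm_num)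
  have hQ : ContDiff ℝ 1 (uncurry (pdT U)) := contDiff_pdT (n := 1) hU
  rw [intervalIntegral.integral_mul_deriv_eq_deriv_mul (u' := pdT U R) (v := pdT U R)
    (v' := pdT (pdT U) R)
    (fun θ _ => (hasDerivAt_pdT (hU1.differentiable (by simp) _)).sub_const c)
    (fun θ _ => hasDerivAt_pdT (hQ.differentiable (by simp) _))
    ((continuous_pdT hU1 R).intervalIntegrable _ _)
    ((continuous_pdT hQ R).intervalIntegrable _ _), hUper.eq, (periodic_pdT hUper).eq,
    sub_self, zero_sub]
  simp only [sq]

theorem hasDerivAt_correction (hU : ContDiff ℝ 2 (uncurry U)) (hA : ContDiff ℝ 1 (uncurry A))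
    (hUper : Periodic (U R) (2 * π)) (hR : R ≠ 0) (eqU : WaveEquationU U A R) :
    HasDerivAt (correction U)
      (((∫ θ in 0..2 * π, (pdR U R θ - ⨍ t in 0..2 * π, pdR U R t) ^ 2)
          - ∫ θ in 0..2 * π, pdT U R θ ^ 2) / R
        - 2 * correction U R / R
        + 1 / (2 * R ^ 3)
          * ∫ θ in 0..2 * π, (U R θ - ⨍ t in 0..2 * π, U R t) * twistLagrangian U A R θ) R := by
  have hU1 : ContDiff ℝ 1 (uncurry U) := hU.of_le (by norm_num)
  have hUc := hU1.continuous.uncurry_left R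
  have hP := continuous_pdR hU1 R
  have hQT := continuous_pdT (contDiff_pdT (n := 1) hU) R
  have hW := continuous_twistLagrangian hU1 hA R
  set m := ⨍ t in 0..2 * π, U R t with hm
  have integral_mul_pdR_pdR : ∫ θ in 0..2 * π, (U R θ - m) * pdR (pdR U) R θ
      = -(∫ θ in 0..2 * π, pdT U R θ ^ 2) - 1 / R * (∫ θ in 0..2 * π, (U R θ - m) * pdR U R θ)
        + 1 / (2 * R ^ 2) * ∫ θ in 0..2 * π, (U R θ - m) * twistLagrangian U A R θ := by
    rw [← integral_sub_const_mul_pdT_pdT hU hUper m, ← intervalIntegral.integral_const_mul,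
      ← intervalIntegral.integral_const_mul, ← intervalIntegral.integral_sub,
      ← intervalIntegral.integral_add]
    · congr with θ
      rw [eqU.pdR_pdR_eq hU hR]
      ring
    all_goals exact Continuous.intervalIntegrable (by fun_prop) _ _
  refine (((hasDerivAt_const R (1 : ℝ)).fun_div (hasDerivAt_id' R) hR).fun_mul
    (hasDerivAt_integral_sub_average_mul_pdR hU 0 (2 * π))).congr_deriv ?_
  rw [← hm, integral_mul_pdR_pdR, correction]
  field_simp
  ring

theorem energy_eq_add (hU : ContDiff ℝ 1 (uncurry U)) (hA : ContDiff ℝ 1 (uncurry A)) (b R : ℝ) :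
    energy U A b R = (∫ θ in 0..2 * π, (pdR U R θ - b / R) ^ 2)
      + (∫ θ in 0..2 * π, pdT U R θ ^ 2)
      + 1 / (4 * R ^ 2) * ∫ θ in 0..2 * π, twistEnergyDensity U A R θ := by
  have hP := continuous_pdR hU R
  have hQ := continuous_pdT hU R
  have hS := continuous_twistEnergyDensity hU hA R
  rw [energy, ← intervalIntegral.integral_const_mul, ← intervalIntegral.integral_add,
    ← intervalIntegral.integral_add]
  · congr with θ
    rw [energyDensity, twistEnergyDensity]
    ring
  all_goals exact Continuous.intervalIntegrable (by fun_prop) _ _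

theorem integral_twistEnergyDensity_nonneg (U A : ℝ → ℝ → ℝ) (R : ℝ) :
    0 ≤ ∫ θ in 0..2 * π, twistEnergyDensity U A R θ :=
  intervalIntegral.integral_nonneg two_pi_pos.le fun _ _ =>
    mul_nonneg (exp_pos _).le (add_nonneg (sq_nonneg _) (sq_nonneg _))

theorem integral_sq_add_integral_sq_le_energy (hU : ContDiff ℝ 1 (uncurry U))
    (hA : ContDiff ℝ 1 (uncurry A)) (b R : ℝ) :
    (∫ θ in 0..2 * π, (pdR U R θ - b / R) ^ 2) + ∫ θ in 0..2 * π, pdT U R θ ^ 2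
      ≤ energy U A b R := by
  rw [energy_eq_add hU hA]
  exact le_add_of_nonneg_right
    (mul_nonneg (by positivity) (integral_twistEnergyDensity_nonneg U A R))

theorem energy_nonneg (U A : ℝ → ℝ → ℝ) (b R : ℝ) : 0 ≤ energy U A b R :=
  intervalIntegral.integral_nonneg two_pi_pos.le fun _ _ => by
    unfold energyDensity
    positivity

theorem integral_pdT_sq_le_energy (hU : ContDiff ℝ 1 (uncurry U))
    (hA : ContDiff ℝ 1 (uncurry A)) (b R : ℝ) :
    ∫ θ in 0..2 * π, pdT U R θ ^ 2 ≤ energy U A b R :=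
  (le_add_of_nonneg_left (integral_sq_nonneg two_pi_pos.le _)).trans
    (integral_sq_add_integral_sq_le_energy hU hA b R)

theorem integral_twistEnergyDensity_le (hU : ContDiff ℝ 1 (uncurry U))
    (hA : ContDiff ℝ 1 (uncurry A)) (hR : R ≠ 0) (b : ℝ) :
    ∫ θ in 0..2 * π, twistEnergyDensity U A R θ ≤ 4 * R ^ 2 * energy U A b R := by
  have kinetic_nonneg : 0 ≤ ∫ θ in 0..2 * π, (pdR U R θ - b / R) ^ 2 :=
    integral_sq_nonneg two_pi_pos.le _
  have potential_nonneg : 0 ≤ ∫ θ in 0..2 * π, pdT U R θ ^ 2 :=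
    integral_sq_nonneg two_pi_pos.le _
  calc ∫ θ in 0..2 * π, twistEnergyDensity U A R θ
      = 4 * R ^ 2 * (1 / (4 * R ^ 2) * ∫ θ in 0..2 * π, twistEnergyDensity U A R θ) := by
        field_simp
    _ ≤ 4 * R ^ 2 * energy U A b R := by
        gcongr
        rw [energy_eq_add hU hA]
        linarith

theorem abs_sub_average_le_sqrt_energy (hU : ContDiff ℝ 1 (uncurry U))
    (hA : ContDiff ℝ 1 (uncurry A)) (hUper : Periodic (U R) (2 * π)) (b θ : ℝ) :
    |U R θ - ⨍ t in 0..2 * π, U R t| ≤ √(energy U A b R) := by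
  refine abs_le_sqrt ?_
  have potential_le := integral_pdT_sq_le_energy hU hA b R
  calc (U R θ - ⨍ t in 0..2 * π, U R t) ^ 2
      ≤ 2 * π / 12 * ∫ t in 0..2 * π, pdT U R t ^ 2 :=
        sq_sub_interval_average_le_of_periodic two_pi_pos (by fun_prop) hUper θ
    _ ≤ 1 * energy U A b R := by
        gcongr
        · exact integral_sq_nonneg two_pi_pos.le _
        · linarith [pi_le_four]
    _ = energy U A b R := one_mul _

theorem abs_twistLagrangian_le (U A : ℝ → ℝ → ℝ) (R θ : ℝ) :
    |twistLagrangian U A R θ| ≤ twistEnergyDensity U A R θ := by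
  rw [twistLagrangian, twistEnergyDensity, abs_mul, abs_exp]
  gcongr
  exact abs_le.2 ⟨by linarith [sq_nonneg (pdR A R θ)], by linarith [sq_nonneg (pdT A R θ)]⟩

theorem abs_integral_sub_average_mul_twistLagrangian_le (hU : ContDiff ℝ 1 (uncurry U))
    (hA : ContDiff ℝ 1 (uncurry A)) (hUper : Periodic (U R) (2 * π)) (hR : R ≠ 0) (b : ℝ) :
    |∫ θ in 0..2 * π, (U R θ - ⨍ t in 0..2 * π, U R t) * twistLagrangian U A R θ|
      ≤ 4 * R ^ 2 * energy U A b R ^ (3 / 2 : ℝ) := by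
  have hS := continuous_twistEnergyDensity hU hA R
  have pointwise_le (θ : ℝ) : |(U R θ - ⨍ t in 0..2 * π, U R t) * twistLagrangian U A R θ|
      ≤ √(energy U A b R) * twistEnergyDensity U A R θ := by
    rw [abs_mul]
    exact mul_le_mul (abs_sub_average_le_sqrt_energy hU hA hUper b θ)
      (abs_twistLagrangian_le U A R θ) (abs_nonneg _) (sqrt_nonneg _)
  calc |∫ θ in 0..2 * π, (U R θ - ⨍ t in 0..2 * π, U R t) * twistLagrangian U A R θ|
      ≤ ∫ θ in 0..2 * π, √(energy U A b R) * twistEnergyDensity U A R θ := by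
        rw [← norm_eq_abs]
        exact intervalIntegral.norm_integral_le_of_norm_le two_pi_pos.le
          (.of_forall fun θ _ => pointwise_le θ)
          ((hS.intervalIntegrable _ _).const_mul _)
    _ = √(energy U A b R) * ∫ θ in 0..2 * π, twistEnergyDensity U A R θ :=
        intervalIntegral.integral_const_mul _ _
    _ ≤ √(energy U A b R) * (4 * R ^ 2 * energy U A b R) := by
        gcongr
        exact integral_twistEnergyDensity_le hU hA hR b
    _ = 4 * R ^ 2 * energy U A b R ^ (3 / 2 : ℝ) := by
        rw [show (3 / 2 : ℝ) = 1 / 2 + 1 by norm_num,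
          rpow_add_one' (energy_nonneg U A b R) (by norm_num), ← sqrt_eq_rpow]
        ring

theorem correction_eq_of_sub_const (hU : ContDiff ℝ 1 (uncurry U)) (c : ℝ) :
    correction U R
      = 1 / R * ∫ θ in 0..2 * π, (U R θ - ⨍ t in 0..2 * π, U R t) * (pdR U R θ - c) := by
  have hUc := hU.continuous.uncurry_left R
  have hP := continuous_pdR hU R
  have integral_const_eq_zero :
      ∫ θ in 0..2 * π, c * (U R θ - ⨍ t in 0..2 * π, U R t) = 0 := by
    rw [intervalIntegral.integral_const_mul,
      integral_sub_interval_average (hUc.intervalIntegrable _ _), mul_zero]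
  have integral_split : ∫ θ in 0..2 * π, (U R θ - ⨍ t in 0..2 * π, U R t) * (pdR U R θ - c)
      = (∫ θ in 0..2 * π, (U R θ - ⨍ t in 0..2 * π, U R t) * pdR U R θ)
        - ∫ θ in 0..2 * π, c * (U R θ - ⨍ t in 0..2 * π, U R t) := by
    rw [← intervalIntegral.integral_sub]
    · congr with θ
      ring
    all_goals exact Continuous.intervalIntegrable (by fun_prop) _ _
  rw [integral_split, integral_const_eq_zero, sub_zero, correction]

theorem abs_correction_le (hU : ContDiff ℝ 1 (uncurry U)) (hA : ContDiff ℝ 1 (uncurry A))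
    (hUper : Periodic (U R) (2 * π)) (hR : 0 < R) (b : ℝ) :
    |correction U R| ≤ 15 / 16 * energy U A b R / R := by
  have hUc := hU.continuous.uncurry_left R
  have hP := continuous_pdR hU R
  set p := ∫ θ in 0..2 * π, (pdR U R θ - b / R) ^ 2
  set q := ∫ θ in 0..2 * π, pdT U R θ ^ 2
  set H := ∫ θ in 0..2 * π, (U R θ - ⨍ t in 0..2 * π, U R t) * (pdR U R θ - b / R)
  have hp : 0 ≤ p := integral_sq_nonneg two_pi_pos.le _
  have hq : 0 ≤ q := integral_sq_nonneg two_pi_pos.le _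
  have variance_le : ∫ θ in 0..2 * π, (U R θ - ⨍ t in 0..2 * π, U R t) ^ 2 ≤ 10 / 3 * q :=
    calc _ ≤ (2 * π) ^ 2 / 12 * q :=
          integral_sub_interval_average_sq_le_of_periodic two_pi_pos (by fun_prop) hUper
      _ ≤ 10 / 3 * q :=
          mul_le_mul_of_nonneg_right (by nlinarith [pi_gt_three, pi_lt_d2]) hq
  -- Any constant below `1` gives coercivity for `R ≥ 1`; `15 / 16` exceeds `√(10 / 3) / 2`.
  have sq_H_le : H ^ 2 ≤ (15 / 16 * (p + q)) ^ 2 :=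
    calc H ^ 2 ≤ (∫ θ in 0..2 * π, (U R θ - ⨍ t in 0..2 * π, U R t) ^ 2) * p := by
          apply sq_integral_mul_le two_pi_pos.le <;>
            exact Continuous.intervalIntegrable (by fun_prop) _ _
      _ ≤ 10 / 3 * q * p := by gcongr
      _ ≤ (15 / 16 * (p + q)) ^ 2 := by nlinarith [sq_nonneg (p - q), mul_nonneg hp hq]
  rw [correction_eq_of_sub_const hU (b / R), abs_mul, abs_of_pos (one_div_pos.2 hR),
    one_div_mul_eq_div]
  gcongr
  calc |H| ≤ 15 / 16 * (p + q) := abs_le_of_sq_le_sq sq_H_le (by positivity)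
    _ ≤ 15 / 16 * energy U A b R := by
        gcongr
        exact integral_sq_add_integral_sq_le_energy hU hA b R

theorem energy_le_mul_correctedEnergy (hU : ContDiff ℝ 1 (uncurry U))
    (hA : ContDiff ℝ 1 (uncurry A)) (hUper : Periodic (U R) (2 * π)) (hR : 1 ≤ R) :
    energy U A (1 / 4) R ≤ 16 * correctedEnergy U A R := by
  have hE := energy_nonneg U A (1 / 4) R
  have correction_le : |correction U R| ≤ 15 / 16 * energy U A (1 / 4) R :=
    (abs_correction_le hU hA hUper (zero_lt_one.trans_le hR) (1 / 4)).trans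
      (div_le_self (by positivity) hR)
  rw [correctedEnergy]
  linarith [neg_abs_le (correction U R)]

theorem correctedEnergy_nonneg (hU : ContDiff ℝ 1 (uncurry U)) (hA : ContDiff ℝ 1 (uncurry A))
    (hUper : Periodic (U R) (2 * π)) (hR : 1 ≤ R) : 0 ≤ correctedEnergy U A R :=
  nonneg_of_mul_nonneg_right
    ((energy_nonneg U A (1 / 4) R).trans (energy_le_mul_correctedEnergy hU hA hUper hR))
    (by norm_num)

theorem neg_correction_div_le (hU : ContDiff ℝ 1 (uncurry U)) (hA : ContDiff ℝ 1 (uncurry A))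
    (hUper : Periodic (U R) (2 * π)) (hR : 1 ≤ R) :
    -(correction U R / R) ≤ 128 * correctedEnergy U A R / R ^ 2 := by
  have hR0 : 0 < R := zero_lt_one.trans_le hR
  have hEhat := correctedEnergy_nonneg hU hA hUper hR
  calc -(correction U R / R) = -correction U R / R := (neg_div _ _).symm
    _ ≤ 15 / 16 * energy U A (1 / 4) R / R / R := by
        gcongr
        exact (neg_le_abs _).trans (abs_correction_le hU hA hUper hR0 _)
    _ = 15 / 16 * energy U A (1 / 4) R / R ^ 2 := by rw [div_div, sq]
    _ ≤ 128 * correctedEnergy U A R / R ^ 2 := by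
        refine div_le_div_of_nonneg_right ?_ (sq_nonneg R)
        linarith [energy_le_mul_correctedEnergy hU hA hUper hR]

theorem integral_sub_average_mul_twistLagrangian_le_correctedEnergy
    (hU : ContDiff ℝ 1 (uncurry U)) (hA : ContDiff ℝ 1 (uncurry A))
    (hUper : Periodic (U R) (2 * π)) (hR : 1 ≤ R) :
    1 / (2 * R ^ 3)
        * ∫ θ in 0..2 * π, (U R θ - ⨍ t in 0..2 * π, U R t) * twistLagrangian U A R θ
      ≤ 128 * correctedEnergy U A R ^ (3 / 2 : ℝ) / R := by
  have hR0 : 0 < R := zero_lt_one.trans_le hR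
  have hE := energy_nonneg U A (1 / 4) R
  have rpow_sixteen : (16 : ℝ) ^ (3 / 2 : ℝ) = 64 := by
    rw [show (16 : ℝ) = 4 ^ (2 : ℝ) by norm_num, ← rpow_mul (by norm_num)]
    norm_num
  calc _ ≤ 1 / (2 * R ^ 3) * (4 * R ^ 2 * energy U A (1 / 4) R ^ (3 / 2 : ℝ)) := by
        gcongr
        exact (le_abs_self _).trans
          (abs_integral_sub_average_mul_twistLagrangian_le hU hA hUper hR0.ne' _)
    _ ≤ 1 / (2 * R ^ 3) * (4 * R ^ 2 * (16 * correctedEnergy U A R) ^ (3 / 2 : ℝ)) := by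
        gcongr
        exact energy_le_mul_correctedEnergy hU hA hUper hR
    _ = 128 * correctedEnergy U A R ^ (3 / 2 : ℝ) / R := by
        rw [mul_rpow (by norm_num) (correctedEnergy_nonneg hU hA hUper hR), rpow_sixteen]
        field_simp
        ring

theorem hasDerivAt_correctedEnergy (hU : ContDiff ℝ 2 (uncurry U)) (hA : ContDiff ℝ 2 (uncurry A))
    (hUper : ∀ r, Periodic (U r) (2 * π)) (hAper : ∀ r, Periodic (A r) (2 * π))
    (hR : R ≠ 0) (eqU : WaveEquationU U A R) (eqA : WaveEquationA U A R) :
    HasDerivAt (correctedEnergy U A)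
      (-(correctedEnergy U A R / R) - correction U R / R
        + ((∫ θ in 0..2 * π, (pdR U R θ - ⨍ t in 0..2 * π, pdR U R t) ^ 2)
          - ∫ θ in 0..2 * π, (pdR U R θ - 1 / 4 / R) ^ 2) / R
        + 1 / (2 * R ^ 3)
          * ∫ θ in 0..2 * π, (U R θ - ⨍ t in 0..2 * π, U R t) * twistLagrangian U A R θ) R := by
  have hU1 : ContDiff ℝ 1 (uncurry U) := hU.of_le (by norm_num)
  have hA1 : ContDiff ℝ 1 (uncurry A) := hA.of_le (by norm_num)
  refine ((hasDerivAt_energy hU hA hUper hAper hR eqU eqA (1 / 4)).add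
    (hasDerivAt_correction hU hA1 (hUper R) hR eqU)).congr_deriv ?_
  rw [correctedEnergy, energy_eq_add hU1 hA1]
  ring

end Gowdy

open Gowdy in
theorem stmt8_general {U A : ℝ → ℝ → ℝ} {R : ℝ} (hU : ContDiff ℝ 2 (uncurry U))
    (hA : ContDiff ℝ 2 (uncurry A)) (hUper : ∀ r, Periodic (U r) (2 * π))
    (hAper : ∀ r, Periodic (A r) (2 * π)) (hR : 1 ≤ R) (eqU : WaveEquationU U A R)
    (eqA : WaveEquationA U A R) :
    0 ≤ correctedEnergy U A R ∧ ∃ d, HasDerivAt (correctedEnergy U A) d R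
      ∧ d ≤ -(correctedEnergy U A R / R) + 128 * correctedEnergy U A R / R ^ 2
        + 128 * correctedEnergy U A R ^ (3 / 2 : ℝ) / R := by
  have hR0 : 0 < R := zero_lt_one.trans_le hR
  have hU1 : ContDiff ℝ 1 (uncurry U) := hU.of_le (by norm_num)
  have hA1 : ContDiff ℝ 1 (uncurry A) := hA.of_le (by norm_num)
  have hP := continuous_pdR hU1 R
  refine ⟨correctedEnergy_nonneg hU1 hA1 (hUper R) hR, _,
    hasDerivAt_correctedEnergy hU hA hUper hAper hR0.ne' eqU eqA, ?_⟩
  have correction_term := neg_correction_div_le hU1 hA1 (hUper R) hR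
  have lagrangian_term :=
    integral_sub_average_mul_twistLagrangian_le_correctedEnergy hU1 hA1 (hUper R) hR
  have variance_term : ((∫ θ in 0..2 * π, (pdR U R θ - ⨍ t in 0..2 * π, pdR U R t) ^ 2)
      - ∫ θ in 0..2 * π, (pdR U R θ - 1 / 4 / R) ^ 2) / R ≤ 0 :=
    div_nonpos_of_nonpos_of_nonneg (sub_nonpos.2 <|
      integral_sub_interval_average_sq_le two_pi_pos.le (hP.intervalIntegrable _ _)
        ((hP.pow 2).intervalIntegrable _ _) _) hR0.le
  linarith

theorem stmt8
    (R₀ : ℝ) (hR₀ : 0 < R₀)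
    (U A : ℝ → ℝ → ℝ)
    (hU : ContDiff ℝ (⊤ : ℕ∞) (Function.uncurry U))
    (hA : ContDiff ℝ (⊤ : ℕ∞) (Function.uncurry A))
    (hUper : ∀ R θ, U R (θ + 2 * π) = U R θ)
    (hAper : ∀ R θ, A R (θ + 2 * π) = A R θ)
    (eqU : ∀ R, R₀ ≤ R → ∀ θ : ℝ,
      deriv (fun r => r * pdR U r θ) R - deriv (fun t => R * pdT U R t) θ
        = exp (4 * U R θ) / (2 * R) * ((pdR A R θ) ^ 2 - (pdT A R θ) ^ 2))
    (eqA : ∀ R, R₀ ≤ R → ∀ θ : ℝ,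
      deriv (fun r => r⁻¹ * pdR A r θ) R - deriv (fun t => R⁻¹ * pdT A R t) θ
        = 4 / R * (-(pdR U R θ * pdR A R θ) + pdT U R θ * pdT A R θ))
    (Eb : ℝ → ℝ → ℝ)
    (hEb : ∀ b R, Eb b R = ∫ θ in (0:ℝ)..(2 * π),
      (pdR U R θ - b / R) ^ 2 + (pdT U R θ) ^ 2
        + exp (4 * U R θ) / (4 * R ^ 2) * ((pdR A R θ) ^ 2 + (pdT A R θ) ^ 2))
    (avgU : ℝ → ℝ)
    (havgU : ∀ R, avgU R = 1 / (2 * π) * ∫ θ in (0:ℝ)..(2 * π), U R θ)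
    (G : ℝ → ℝ)
    (hG : ∀ R, G R = 1 / R * ∫ θ in (0:ℝ)..(2 * π), (U R θ - avgU R) * pdR U R θ)
    (Ehat : ℝ → ℝ)
    (hEhat : ∀ R, Ehat R = Eb (1/4) R + G R) :
    ∃ K : ℝ, 0 < K ∧ ∀ R, max R₀ 1 ≤ R →
      0 ≤ Ehat R ∧ ∃ d : ℝ, HasDerivWithinAt Ehat d (Set.Ici R₀) R
        ∧ d ≤ -(Ehat R / R) + K * Ehat R / R ^ 2 + K * Ehat R ^ ((3:ℝ)/2) / R := by
  have avgU_eq (R : ℝ) : avgU R = ⨍ t in 0..2 * π, U R t := by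
    rw [havgU, interval_average_eq_div, sub_zero, one_div_mul_eq_div]
  obtain rfl : Ehat = Gowdy.correctedEnergy U A := by
    funext R
    simp only [hEhat, hEb, hG, avgU_eq]
    rfl
  refine ⟨128, by norm_num, fun R hR => ?_⟩
  obtain ⟨hRR₀, hR1⟩ := max_le_iff.1 hR
  obtain ⟨nonneg, d, hd, hle⟩ := stmt8_general (hU.of_le (WithTop.coe_le_coe.2 le_top))
    (hA.of_le (WithTop.coe_le_coe.2 le_top)) hUper hAper hR1 (eqU R hRR₀) (eqA R hRR₀)
  exact ⟨nonneg, d, hd.hasDerivWithinAt, hle⟩
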